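/- Let t > 0, m ≥ 2, and let f : ℝⁿ → S^{m−1} be a Borel measurable encoder with p_data a Borel probability measure on ℝⁿ. Define L_unif(f;t) = log E_{x,y iid ∼ p_data}[e^{−t‖f(x)−f(y)‖₂²}]. Then −2t + log ₀F₁(;m/2; t²) ≤ L_unif(f;t) ≤ 0; the lower bound is achieved if and only if f is perfectly uniform (the pushforward of p_data under f equals σ_{m−1}), and the upper bound 0 is achieved if and only if f is degenerate, i.e., f(x) equals a fixed vector for p_data-almost every x. -/

import Mathlib

open MeasureTheory Real Filter Metric
open scoped RealInnerProductSpace ENNReal Topology BigOperators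

noncomputable section

/-- `ℝ^n` as a Euclidean space. -/
abbrev Euc (n : ℕ) : Type := EuclideanSpace ℝ (Fin n)

/-- The unit sphere in `ℝ^m`; the sphere `S^d` of the informal statement is `Sph (d+1)`. -/
abbrev Sph (m : ℕ) := Metric.sphere (0 : Euc m) 1

/-- The uniform (normalized surface-area) probability measure on the unit sphere of `ℝ^m`. -/
noncomputable def unifSphere (m : ℕ) : Measure (Sph m) :=
  ((volume : Measure (Euc m)).toSphere Set.univ)⁻¹ • (volume : Measure (Euc m)).toSphere

/-- Confluent hypergeometric limit function `₀F₁(; α; z) = Σ_n zⁿ/((α)_n n!)`. -/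
noncomputable def hyp0F1 (α z : ℝ) : ℝ :=
  ∑' k : ℕ, z ^ k / ((ascPochhammer ℝ k).eval α * (Nat.factorial k : ℝ))

/-- The uniformity loss `L_unif(f;t) = log E_{x,y iid ∼ p_data}[exp(−t‖f(x)−f(y)‖²)]`. -/
noncomputable def Lunif {n m : ℕ} (pdata : Measure (Euc n)) (f : Euc n → Sph m) (t : ℝ) : ℝ :=
  Real.log (∫ x, ∫ y, Real.exp (-t * ‖(f x : Euc m) - (f y : Euc m)‖ ^ 2) ∂pdata ∂pdata)

section Energy

open ProbabilityTheory ComplexConjugate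

instance gaussianReal_openPos : (gaussianReal 0 1).IsOpenPosMeasure :=
  (gaussianReal_absolutelyContinuous' 0 one_ne_zero).isOpenPosMeasure

lemma stdGaussian_openPos (m : ℕ) : (stdGaussian (Euc m)).IsOpenPosMeasure := by
  rw [← map_pi_eq_stdGaussian]
  exact (PiLp.continuous_toLp 2 (fun _ : Fin m => ℝ)).isOpenPosMeasure_map
    (WithLp.toLp_surjective 2)

lemma charFun_cont {m : ℕ} (μ : Measure (Euc m)) [IsProbabilityMeasure μ] :
    Continuous (charFun μ) := by
  have : charFun μ = fun t => ∫ x, Complex.exp (⟪x, t⟫ * Complex.I) ∂μ := rfl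
  rw [this]
  refine continuous_of_dominated (bound := fun _ => 1) ?_ ?_ (integrable_const _) ?_
  · intro t
    exact Continuous.aestronglyMeasurable (by fun_prop)
  · intro t
    exact ae_of_all _ fun x => by simp [Complex.norm_exp]
  · exact ae_of_all _ fun x => by fun_prop

lemma gauss_kernel {m : ℕ} {t : ℝ} (ht : 0 < t) (u v : Euc m) :
    ((Real.exp (-t * ‖u - v‖ ^ 2) : ℝ) : ℂ) =
      ∫ x, Complex.exp (⟪u, √(2 * t) • x⟫ * Complex.I) *
        conj (Complex.exp (⟪v, √(2 * t) • x⟫ * Complex.I)) ∂(stdGaussian (Euc m)) := by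
  have h := charFun_stdGaussian (E := Euc m) (√(2 * t) • (u - v))
  rw [charFun_apply] at h
  have e : ((Real.exp (-t * ‖u - v‖ ^ 2) : ℝ) : ℂ)
      = Complex.exp (- (‖√(2 * t) • (u - v)‖ : ℂ) ^ 2 / 2) := by
    rw [norm_smul, Real.norm_of_nonneg (Real.sqrt_nonneg _)]
    have : (Real.sqrt (2 * t)) ^ 2 = 2 * t := Real.sq_sqrt (by positivity)
    rw [← Complex.ofReal_pow, mul_pow, this]
    push_cast
    congr 1
    ring
  rw [e, ← h]
  congr 1
  ext x
  rw [← Complex.exp_conj, ← Complex.exp_add]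
  congr 1
  simp only [map_mul, Complex.conj_I, Complex.conj_ofReal, real_inner_smul_right, inner_sub_right,
    real_inner_comm]
  push_cast
  ring

lemma energy_fourier {m : ℕ} {t : ℝ} (ht : 0 < t) (μ ν : Measure (Euc m))
    [IsProbabilityMeasure μ] [IsProbabilityMeasure ν] :
    ((∫ u, ∫ v, Real.exp (-t * ‖u - v‖ ^ 2) ∂ν ∂μ : ℝ) : ℂ) =
      ∫ x, charFun μ (√(2 * t) • x) * conj (charFun ν (√(2 * t) • x)) ∂(stdGaussian (Euc m)) := by
  set γ := stdGaussian (Euc m) with hγ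
  set G : Euc m → Euc m → ℂ := fun u x => Complex.exp (⟪u, √(2 * t) • x⟫ * Complex.I) with hG
  have hGc : Continuous fun p : Euc m × Euc m => G p.1 p.2 := by
    simp only [hG]; fun_prop
  have hn : ∀ u x, ‖G u x‖ = 1 := fun u x => by simp [hG, Complex.norm_exp]
  have h1 : ((∫ u, ∫ v, Real.exp (-t * ‖u - v‖ ^ 2) ∂ν ∂μ : ℝ) : ℂ) =
      ∫ u, ∫ v, ∫ x, G u x * conj (G v x) ∂γ ∂ν ∂μ := by
    rw [← integral_complex_ofReal]
    congr 1; ext u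
    rw [← integral_complex_ofReal]
    congr 1; ext v
    exact gauss_kernel ht u v
  have int3 : Integrable (fun p : Euc m × Euc m => ∫ v, G p.1 p.2 * conj (G v p.2) ∂ν) (μ.prod γ) := by
    have hI : Integrable (fun q : (Euc m × Euc m) × Euc m => G q.1.1 q.1.2 * conj (G q.2 q.1.2))
        ((μ.prod γ).prod ν) := by
      refine Integrable.of_bound (C := 1) (Continuous.aestronglyMeasurable ?_)
        (ae_of_all _ fun q => by simp [hn])
      have a : Continuous fun q : (Euc m × Euc m) × Euc m => G q.1.1 q.1.2 :=
        hGc.comp (by fun_prop : Continuous fun q : (Euc m × Euc m) × Euc m => (q.1.1, q.1.2))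
      have b : Continuous fun q : (Euc m × Euc m) × Euc m => G q.2 q.1.2 :=
        hGc.comp (by fun_prop : Continuous fun q : (Euc m × Euc m) × Euc m => (q.2, q.1.2))
      exact a.mul (Complex.continuous_conj.comp b)
    exact hI.integral_prod_left
  have h2 : ∀ u, ∫ v, ∫ x, G u x * conj (G v x) ∂γ ∂ν = ∫ x, ∫ v, G u x * conj (G v x) ∂ν ∂γ := by
    intro u
    apply integral_integral_swap
    refine Integrable.of_bound (C := 1) (Continuous.aestronglyMeasurable ?_)
        (ae_of_all _ fun q => ?_)
    swap
    · change ‖G u q.2 * conj (G q.1 q.2)‖ ≤ 1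
      simp [hn]
    have a : Continuous fun q : Euc m × Euc m => G u q.2 :=
        hGc.comp (by fun_prop : Continuous fun q : Euc m × Euc m => (u, q.2))
    exact a.mul (Complex.continuous_conj.comp hGc)
  rw [h1]
  simp_rw [h2]
  rw [integral_integral_swap int3]
  congr 1; ext x
  rw [charFun_apply, charFun_apply, ← integral_conj, ← integral_mul_const]
  congr 1; ext u
  rw [← integral_const_mul]

lemma energy_diff {m : ℕ} {t : ℝ} (ht : 0 < t) (μ ν : Measure (Euc m))
    [IsProbabilityMeasure μ] [IsProbabilityMeasure ν] {c : ℝ}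
    (hc : ∀ u, ‖u‖ = 1 → ∫ v, Real.exp (-t * ‖u - v‖ ^ 2) ∂ν = c)
    (hμ : ∀ᵐ u ∂μ, ‖u‖ = 1) (hν : ∀ᵐ u ∂ν, ‖u‖ = 1) :
    (∫ u, ∫ v, Real.exp (-t * ‖u - v‖ ^ 2) ∂μ ∂μ) - c =
      ∫ x, ‖charFun μ (√(2 * t) • x) - charFun ν (√(2 * t) • x)‖ ^ 2 ∂(stdGaussian (Euc m)) := by
  have e1 : ∫ u, ∫ v, Real.exp (-t * ‖u - v‖ ^ 2) ∂ν ∂μ = c := by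
    rw [integral_congr_ae (g := fun _ => c) (hμ.mono fun u hu => hc u hu)]; simp
  have e2 : ∫ u, ∫ v, Real.exp (-t * ‖u - v‖ ^ 2) ∂ν ∂ν = c := by
    rw [integral_congr_ae (g := fun _ => c) (hν.mono fun u hu => hc u hu)]; simp
  have f1 := energy_fourier ht μ ν
  have f2 := energy_fourier ht ν ν
  have f0 := energy_fourier ht μ μ
  rw [e1] at f1
  rw [e2] at f2
  set φ := fun x => charFun μ (√(2 * t) • x) with hφ
  set ψ := fun x => charFun ν (√(2 * t) • x) with hψ
  have cφ : Continuous φ := (charFun_cont μ).comp (by fun_prop)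
  have cψ : Continuous ψ := (charFun_cont ν).comp (by fun_prop)
  have f3 : (c : ℂ) = ∫ x, ψ x * conj (φ x) ∂(stdGaussian (Euc m)) := by
    rw [← Complex.conj_ofReal, f1, ← integral_conj]
    congr 1; ext x; simp only [map_mul, Complex.conj_conj, φ, ψ]; ring
  have key : ∀ a b : Euc m → ℂ, Continuous a → Continuous b → (∀ x, ‖a x‖ ≤ 1) → (∀ x, ‖b x‖ ≤ 1) →
      Integrable (fun x => a x * conj (b x)) (stdGaussian (Euc m)) := by
    intro a b ha hb ha' hb'
    refine Integrable.of_bound (C := 1)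
      (ha.mul (Complex.continuous_conj.comp hb)).aestronglyMeasurable (ae_of_all _ fun x => ?_)
    simp only [norm_mul, RCLike.norm_conj]
    exact mul_le_one₀ (ha' x) (norm_nonneg _) (hb' x)
  have nφ : ∀ x, ‖φ x‖ ≤ 1 := fun x => norm_charFun_le_one _
  have nψ : ∀ x, ‖ψ x‖ ≤ 1 := fun x => norm_charFun_le_one _
  have g : ((∫ x, ‖φ x - ψ x‖ ^ 2 ∂(stdGaussian (Euc m)) : ℝ) : ℂ)
      = ((∫ u, ∫ v, Real.exp (-t * ‖u - v‖ ^ 2) ∂μ ∂μ : ℝ) : ℂ) - c - c + c := by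
    rw [← integral_complex_ofReal, f0]
    nth_rw 1 [f1]
    nth_rw 1 [f3]
    rw [f2]
    rw [← integral_sub (key _ _ cφ cφ nφ nφ) (key _ _ cφ cψ nφ nψ),
      ← integral_sub _ (key _ _ cψ cφ nψ nφ), ← integral_add _ (key _ _ cψ cψ nψ nψ)]
    · congr 1; ext x
      rw [Complex.ofReal_pow, ← Complex.mul_conj']
      simp only [map_sub]
      ring
    · exact ((key _ _ cφ cφ nφ nφ).sub (key _ _ cφ cψ nφ nψ)).sub (key _ _ cψ cφ nψ nφ)
    · exact (key _ _ cφ cφ nφ nφ).sub (key _ _ cφ cψ nφ nψ)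
  have g' : ∫ x, ‖φ x - ψ x‖ ^ 2 ∂(stdGaussian (Euc m))
      = (∫ u, ∫ v, Real.exp (-t * ‖u - v‖ ^ 2) ∂μ ∂μ) - c - c + c := by exact_mod_cast g
  rw [g']; ring

lemma energy_eq {m : ℕ} {t : ℝ} (ht : 0 < t) (μ ν : Measure (Euc m))
    [IsProbabilityMeasure μ] [IsProbabilityMeasure ν]
    (h : ∫ x, ‖charFun μ (√(2 * t) • x) - charFun ν (√(2 * t) • x)‖ ^ 2 ∂(stdGaussian (Euc m)) = 0) :
    μ = ν := by
  have := stdGaussian_openPos m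
  have c1 : Continuous fun x => charFun μ (√(2 * t) • x) := (charFun_cont μ).comp (by fun_prop)
  have c2 : Continuous fun x => charFun ν (√(2 * t) • x) := (charFun_cont ν).comp (by fun_prop)
  rw [integral_eq_zero_iff_of_nonneg (fun x => by positivity)] at h
  · have h' := (Continuous.ae_eq_iff_eq _ (by fun_prop) continuous_zero).1 h
    apply Measure.ext_of_charFun
    ext x
    have := congrFun h' ((√(2 * t))⁻¹ • x)
    have hs : √(2 * t) ≠ 0 := (Real.sqrt_pos.2 (by positivity)).ne'
    simp only [smul_smul, mul_inv_cancel₀ hs, one_smul, Pi.zero_apply] at this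
    exact sub_eq_zero.1 (norm_eq_zero.1 (pow_eq_zero_iff two_ne_zero |>.1 this))
  · refine Integrable.of_bound (C := 4) (by fun_prop) (ae_of_all _ fun x => ?_)
    rw [Real.norm_of_nonneg (by positivity)]
    have := norm_sub_le (charFun μ (√(2 * t) • x)) (charFun ν (√(2 * t) • x))
    have h1 := norm_charFun_le_one (μ := μ) (√(2 * t) • x)
    have h2 := norm_charFun_le_one (μ := ν) (√(2 * t) • x)
    nlinarith [norm_nonneg (charFun μ (√(2 * t) • x) - charFun ν (√(2 * t) • x))]

end Energy

section Moments

lemma half_moment (j : ℕ) :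
    ∫ r in Set.Ioi (0 : ℝ), r ^ j * Real.exp (-r ^ 2) = 1 / 2 * Real.Gamma (((j : ℝ) + 1) / 2) := by
  have h := integral_rpow_mul_exp_neg_rpow (p := 2) (q := j) (by norm_num)
    (by have : (0 : ℝ) ≤ j := Nat.cast_nonneg j
        linarith)
  rw [← h]
  refine setIntegral_congr_fun measurableSet_Ioi fun x hx => ?_
  simp only [Real.rpow_natCast, Real.rpow_ofNat]

lemma full_moment_even (k : ℕ) :
    ∫ y : ℝ, y ^ (2 * k) * Real.exp (-y ^ 2) = Real.Gamma ((k : ℝ) + 1 / 2) := by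
  have h := integral_comp_abs (f := fun y : ℝ => y ^ (2 * k) * Real.exp (-y ^ 2))
  simp only [sq_abs, Even.pow_abs (even_two_mul k)] at h
  rw [h, half_moment]
  push_cast
  rw [show (2 * (k : ℝ) + 1) / 2 = k + 1 / 2 by ring]
  ring

lemma full_moment_odd (k : ℕ) :
    ∫ y : ℝ, y ^ (2 * k + 1) * Real.exp (-y ^ 2) = 0 := by
  have h := integral_neg_eq_self (fun y : ℝ => y ^ (2 * k + 1) * Real.exp (-y ^ 2)) volume
  simp only [Odd.neg_pow (odd_two_mul_add_one k), neg_sq, neg_mul, integral_neg] at h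
  linarith

lemma gauss_inner_moment {m : ℕ} (u : Euc (m + 1)) (hu : ‖u‖ = 1) (j : ℕ) :
    ∫ x : Euc (m + 1), ⟪u, x⟫ ^ j * Real.exp (-‖x‖ ^ 2) =
      (∫ y : ℝ, y ^ j * Real.exp (-y ^ 2)) * (∫ y : ℝ, Real.exp (-y ^ 2)) ^ m := by
  obtain ⟨b, hb⟩ := Orthonormal.exists_orthonormalBasis_extension_of_card_eq (𝕜 := ℝ)
    (E := Euc (m + 1)) (ι := Fin (m + 1)) (by simp) (v := fun _ => u) (s := {0}) (by
      rw [orthonormal_subsingleton_iff]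
      intro i; simpa using hu)
  have hb0 : b 0 = u := hb 0 rfl
  have e1 : ∫ x : Euc (m + 1), ⟪u, x⟫ ^ j * Real.exp (-‖x‖ ^ 2)
      = ∫ x : Euc (m + 1), (x 0) ^ j * Real.exp (-‖x‖ ^ 2) := by
    rw [← b.repr.measurePreserving.integral_comp b.repr.toHomeomorph.measurableEmbedding
      (fun x : Euc (m + 1) => (x 0) ^ j * Real.exp (-‖x‖ ^ 2))]
    congr 1; ext x
    rw [b.repr_apply_apply, hb0, LinearIsometryEquiv.norm_map]
  rw [e1, ← (PiLp.volume_preserving_toLp (Fin (m + 1))).integral_comp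
    (MeasurableEquiv.toLp 2 _).measurableEmbedding]
  have e2 : ∀ x : Fin (m + 1) → ℝ,
      ((WithLp.toLp 2 x : Euc (m + 1)) 0) ^ j * Real.exp (-‖(WithLp.toLp 2 x : Euc (m + 1))‖ ^ 2)
      = ∏ i, (Fin.cons (fun y : ℝ => y ^ j * Real.exp (-y ^ 2))
          (fun _ : Fin m => fun y : ℝ => Real.exp (-y ^ 2)) : Fin (m + 1) → ℝ → ℝ) i (x i) := by
    intro x
    rw [Fin.prod_univ_succ, EuclideanSpace.real_norm_sq_eq, ← Finset.sum_neg_distrib, Real.exp_sum,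
      Fin.prod_univ_succ]
    simp [mul_assoc]
  simp_rw [e2]
  rw [integral_fintype_prod_volume_eq_prod, Fin.prod_univ_succ]
  simp

lemma polar_moment {m : ℕ} (u : Euc (m + 1)) (j : ℕ) :
    ∫ x : Euc (m + 1), ⟪u, x⟫ ^ j * Real.exp (-‖x‖ ^ 2) =
      (∫ v : Sph (m + 1), ⟪u, (v : Euc (m + 1))⟫ ^ j ∂(volume : Measure (Euc (m + 1))).toSphere) *
        ∫ r in Set.Ioi (0 : ℝ), r ^ (m + j) * Real.exp (-r ^ 2) := by
  set μ := (volume : Measure (Euc (m + 1)))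
  have hdim : Module.finrank ℝ (Euc (m + 1)) - 1 = m := by simp
  calc
    _ = ∫ x : ({(0)}ᶜ : Set (Euc (m + 1))), ⟪u, x.1⟫ ^ j * Real.exp (-‖x.1‖ ^ 2) ∂(μ.comap (↑)) := by
      rw [integral_subtype_comap (measurableSet_singleton _).compl
        fun x ↦ ⟪u, x⟫ ^ j * Real.exp (-‖x‖ ^ 2), restrict_compl_singleton]
    _ = ∫ p, ⟪u, (p.1 : Euc (m + 1))⟫ ^ j * ((p.2 : ℝ) ^ j * Real.exp (-(p.2 : ℝ) ^ 2))
          ∂μ.toSphere.prod (.volumeIoiPow (Module.finrank ℝ (Euc (m + 1)) - 1)) := by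
      rw [← μ.measurePreserving_homeomorphUnitSphereProd.integral_comp
        (Homeomorph.measurableEmbedding _)]
      congr 1; ext x
      simp only [homeomorphUnitSphereProd_apply_snd_coe, homeomorphUnitSphereProd_apply_fst_coe]
      have hx : ‖(x : Euc (m + 1))‖ ≠ 0 := norm_ne_zero_iff.2 x.2
      rw [real_inner_smul_right, mul_pow, ← mul_assoc, mul_right_comm _ _ (‖(x : Euc (m + 1))‖ ^ j),
        ← mul_pow, inv_mul_cancel₀ hx, one_pow, one_mul]
    _ = (∫ v, ⟪u, (v : Euc (m + 1))⟫ ^ j ∂μ.toSphere) *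
        ∫ r : Set.Ioi (0 : ℝ), ((r : ℝ) ^ j * Real.exp (-(r : ℝ) ^ 2))
          ∂(.volumeIoiPow (Module.finrank ℝ (Euc (m + 1)) - 1)) :=
      integral_prod_mul (L := ℝ) (fun v : Sph (m + 1) => ⟪u, (v : Euc (m + 1))⟫ ^ j)
        (fun r : Set.Ioi (0 : ℝ) => (r : ℝ) ^ j * Real.exp (-(r : ℝ) ^ 2))
    _ = _ := by
      rw [hdim]
      congr 1
      simp only [Measure.volumeIoiPow, ENNReal.ofReal]
      rw [integral_withDensity_eq_integral_smul,
        integral_subtype_comap measurableSet_Ioi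
          fun a ↦ Real.toNNReal (a ^ m) • (a ^ j * Real.exp (-a ^ 2)),
        setIntegral_congr_fun measurableSet_Ioi fun x hx ↦ ?_]
      · rw [NNReal.smul_def, Real.coe_toNNReal _ (pow_nonneg (le_of_lt hx) _), smul_eq_mul, pow_add,
          mul_assoc]
      · exact (measurable_subtype_coe.pow_const _).real_toNNReal

lemma unif_prob (m : ℕ) : IsProbabilityMeasure (unifSphere (m + 1)) := by
  constructor
  rw [unifSphere, Measure.smul_apply, smul_eq_mul]
  refine ENNReal.inv_mul_cancel ?_ (measure_ne_top _ _)
  rw [ne_eq, Measure.measure_univ_eq_zero]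
  exact Measure.toSphere_ne_zero _

lemma Gamma_poch (a : ℝ) (ha : 0 < a) (k : ℕ) :
    Real.Gamma (a + k) = (ascPochhammer ℝ k).eval a * Real.Gamma a := by
  induction k with
  | zero => simp
  | succ k ih =>
    rw [ascPochhammer_succ_eval, Nat.cast_succ, ← add_assoc, Real.Gamma_add_one (by positivity), ih]
    ring

lemma fact_poch (k : ℕ) :
    ((2 * k).factorial : ℝ) = 4 ^ k * k.factorial * (ascPochhammer ℝ k).eval (1 / 2 : ℝ) := by
  induction k with
  | zero => simp
  | succ k ih =>
    rw [ascPochhammer_succ_eval, show 2 * (k + 1) = 2 * k + 1 + 1 by ring, Nat.factorial_succ,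
      Nat.factorial_succ, Nat.factorial_succ]
    push_cast
    rw [ih]
    ring

lemma sphere_moment_mul {m : ℕ} (u : Euc (m + 1)) (hu : ‖u‖ = 1) (j : ℕ) :
    (∫ v, ⟪u, (v : Euc (m + 1))⟫ ^ j ∂(unifSphere (m + 1))) *
      (Real.Gamma (1 / 2) * Real.Gamma (((m + j : ℕ) + 1 : ℝ) / 2)) =
    (∫ y : ℝ, y ^ j * Real.exp (-y ^ 2)) * Real.Gamma (((m + 1 : ℕ) : ℝ) / 2) := by
  set S := (volume : Measure (Euc (m + 1))).toSphere
  have h := (polar_moment u j).symm.trans (gauss_inner_moment u hu j)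
  have h0 := (polar_moment u 0).symm.trans (gauss_inner_moment u hu 0)
  have hA : S.real Set.univ ≠ 0 := by
    rw [measureReal_ne_zero_iff, ne_eq, Measure.measure_univ_eq_zero]
    exact Measure.toSphere_ne_zero _
  rw [half_moment] at h h0
  have h00 := full_moment_even 0
  simp only [mul_zero, pow_zero, one_mul, Nat.cast_zero, zero_add] at h00
  simp only [pow_zero, integral_const, smul_eq_mul, mul_one, add_zero, one_mul, h00] at h h0
  have hU : ∫ v, ⟪u, (v : Euc (m + 1))⟫ ^ j ∂(unifSphere (m + 1))
      = (S.real Set.univ)⁻¹ * ∫ v, ⟪u, (v : Euc (m + 1))⟫ ^ j ∂S := by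
    rw [unifSphere, integral_smul_measure, ENNReal.toReal_inv, smul_eq_mul]
    rfl
  rw [hU]
  have hG : Real.Gamma (1 / 2) ≠ 0 := (Real.Gamma_pos_of_pos (by norm_num)).ne'
  have hG' : Real.Gamma (1 / 2) ^ m ≠ 0 := pow_ne_zero _ hG
  change S.real Set.univ * _ = _ at h0
  set A := ∫ v, ⟪u, (v : Euc (m + 1))⟫ ^ j ∂S
  set M := ∫ y : ℝ, y ^ j * Real.exp (-y ^ 2)
  push_cast at h h0 ⊢
  set R := Real.Gamma (((m : ℝ) + j + 1) / 2)
  set R0 := Real.Gamma (((m : ℝ) + 1) / 2)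
  set g := Real.Gamma (1 / 2)
  rw [inv_mul_eq_div, div_mul_eq_mul_div, div_eq_iff hA]
  apply mul_right_cancel₀ hG'
  linear_combination (2 * g * g ^ m) * h - 2 * M * g ^ m * h0

lemma sphere_moment_odd {m : ℕ} (u : Euc (m + 1)) (hu : ‖u‖ = 1) (k : ℕ) :
    ∫ v, ⟪u, (v : Euc (m + 1))⟫ ^ (2 * k + 1) ∂(unifSphere (m + 1)) = 0 := by
  have h := sphere_moment_mul u hu (2 * k + 1)
  rw [full_moment_odd, zero_mul] at h
  refine (mul_eq_zero.1 h).resolve_right (mul_pos ?_ ?_).ne' <;>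
    exact Real.Gamma_pos_of_pos (by positivity)

lemma sphere_moment_even {m : ℕ} (u : Euc (m + 1)) (hu : ‖u‖ = 1) (k : ℕ) :
    (∫ v, ⟪u, (v : Euc (m + 1))⟫ ^ (2 * k) ∂(unifSphere (m + 1))) *
      (ascPochhammer ℝ k).eval (((m + 1 : ℕ) : ℝ) / 2) = (ascPochhammer ℝ k).eval (1 / 2) := by
  have h := sphere_moment_mul u hu (2 * k)
  rw [full_moment_even, add_comm (k : ℝ), Gamma_poch _ (by norm_num)] at h
  rw [show (((m + 2 * k : ℕ) + 1 : ℝ) / 2) = ((m + 1 : ℕ) : ℝ) / 2 + k by push_cast; ring,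
    Gamma_poch _ (by positivity)] at h
  have h1 : Real.Gamma (1 / 2) ≠ 0 := (Real.Gamma_pos_of_pos (by norm_num)).ne'
  have h2 : Real.Gamma (((m + 1 : ℕ) : ℝ) / 2) ≠ 0 := (Real.Gamma_pos_of_pos (by positivity)).ne'
  apply mul_right_cancel₀ h1
  apply mul_right_cancel₀ h2
  linear_combination h

lemma sphere_exp {m : ℕ} (u : Euc (m + 1)) (hu : ‖u‖ = 1) (t : ℝ) :
    ∫ v, Real.exp (2 * t * ⟪u, (v : Euc (m + 1))⟫) ∂(unifSphere (m + 1)) =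
      hyp0F1 (((m + 1 : ℕ) : ℝ) / 2) (t ^ 2) := by
  have := unif_prob m
  set F : ℕ → Sph (m + 1) → ℝ := fun j v => (2 * t * ⟪u, (v : Euc (m + 1))⟫) ^ j / j.factorial
  have hFb : ∀ j v, ‖F j v‖ ≤ (2 * |t|) ^ j / j.factorial := by
    intro j v
    have : |⟪u, (v : Euc (m + 1))⟫| ≤ 1 := by
      refine (abs_real_inner_le_norm _ _).trans ?_
      simp [hu]
    simp only [F, norm_div, norm_pow, Real.norm_eq_abs, abs_mul, Nat.abs_cast, abs_two]
    have h2 : 2 * |t| * |⟪u, (v : Euc (m + 1))⟫| ≤ 2 * |t| :=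
      mul_le_of_le_one_right (by positivity) this
    exact div_le_div_of_nonneg_right (pow_le_pow_left₀ (by positivity) h2 _) (by positivity)
  have hFc : ∀ j, Continuous (F j) := fun j => by simp only [F]; fun_prop
  have hFi : ∀ j, Integrable (F j) (unifSphere (m + 1)) := fun j =>
    Integrable.of_bound (hFc j).aestronglyMeasurable _ (ae_of_all _ (hFb j))
  have hs : Summable fun j => ∫ v, ‖F j v‖ ∂(unifSphere (m + 1)) := by
    refine Summable.of_nonneg_of_le (fun j => integral_nonneg fun v => norm_nonneg _) (fun j => ?_)
      (Real.summable_pow_div_factorial (2 * |t|))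
    refine (integral_mono (hFi j).norm (integrable_const _) (hFb j)).trans ?_
    simp
  have H := hasSum_integral_of_summable_integral_norm hFi hs
  have hexp : ∀ v, ∑' j, F j v = Real.exp (2 * t * ⟪u, (v : Euc (m + 1))⟫) := fun v => by
    rw [Real.exp_eq_exp_ℝ, NormedSpace.exp_eq_tsum_div]
  simp_rw [hexp] at H
  rw [← H.tsum_eq]
  have hFI : ∀ j, ∫ v, F j v ∂(unifSphere (m + 1)) = (2 * t) ^ j / j.factorial *
      ∫ v, ⟪u, (v : Euc (m + 1))⟫ ^ j ∂(unifSphere (m + 1)) := by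
    intro j
    rw [← integral_const_mul]
    congr 1; ext v
    simp only [F, mul_pow]; ring
  rw [← tsum_even_add_odd (f := fun j => ∫ v, F j v ∂(unifSphere (m + 1)))
    (H.summable.comp_injective (i := fun k => 2 * k) (fun a b h => by simpa using h))
    (H.summable.comp_injective (i := fun k => 2 * k + 1) (fun a b h => by simpa using h))]
  have hodd : ∀ k, ∫ v, F (2 * k + 1) v ∂(unifSphere (m + 1)) = 0 := fun k => by
    rw [hFI, sphere_moment_odd u hu, mul_zero]
  simp only [hodd, tsum_zero, add_zero]
  rw [hyp0F1]
  congr 1; ext k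
  have hP : (ascPochhammer ℝ k).eval (((m + 1 : ℕ) : ℝ) / 2) ≠ 0 :=
    (ascPochhammer_pos k _ (by positivity)).ne'
  have hQ : (ascPochhammer ℝ k).eval (1 / 2 : ℝ) ≠ 0 := (ascPochhammer_pos k _ (by norm_num)).ne'
  rw [hFI, eq_div_of_mul_eq hP (sphere_moment_even u hu k), fact_poch, pow_mul, mul_pow,
    mul_pow (2 ^ 2 : ℝ)]
  norm_num only
  field_simp

lemma sphere_kernel {m : ℕ} (u : Euc (m + 1)) (hu : ‖u‖ = 1) (t : ℝ) :
    ∫ v, Real.exp (-t * ‖u - (v : Euc (m + 1))‖ ^ 2) ∂(unifSphere (m + 1)) =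
      Real.exp (-2 * t) * hyp0F1 (((m + 1 : ℕ) : ℝ) / 2) (t ^ 2) := by
  rw [← sphere_exp u hu t, ← integral_const_mul]
  congr 1; ext v
  rw [← Real.exp_add, norm_sub_sq_real, hu, norm_eq_of_mem_sphere v]
  congr 1
  ring

lemma hyp_pos {m : ℕ} (u : Euc (m + 1)) (hu : ‖u‖ = 1) (t : ℝ) :
    0 < hyp0F1 (((m + 1 : ℕ) : ℝ) / 2) (t ^ 2) := by
  have := unif_prob m
  rw [← sphere_exp u hu t]
  apply integral_exp_pos
  exact Continuous.integrable_of_hasCompactSupport (by fun_prop)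
    (HasCompactSupport.of_compactSpace _)

end Moments

lemma kernel_integrable {n m : ℕ} (t : ℝ) (ht : 0 < t) (ρ : Measure (Euc n × Euc n))
    [IsFiniteMeasure ρ] (f : Euc n → Sph m) (hf : Measurable f) :
    Integrable (fun p : Euc n × Euc n =>
      Real.exp (-t * ‖(f p.1 : Euc m) - (f p.2 : Euc m)‖ ^ 2)) ρ := by
  refine Integrable.of_bound (C := 1) ?_ (ae_of_all _ fun p => ?_)
  · exact Measurable.aestronglyMeasurable (by fun_prop)
  · rw [Real.norm_of_nonneg (Real.exp_nonneg _), Real.exp_le_one_iff]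
    nlinarith [sq_nonneg ‖(f p.1 : Euc m) - (f p.2 : Euc m)‖]

/-- Range of `L_unif`: it lies in `[−2t + log ₀F₁(;m/2;t²), 0]`; the lower
bound is attained iff `f` is perfectly uniform, and the upper bound iff `f` is degenerate
(`p_data`-a.e. constant). -/
theorem Lunif_range (t : ℝ) (ht : 0 < t) {n m : ℕ} (hm : 2 ≤ m)
    (pdata : Measure (Euc n)) [IsProbabilityMeasure pdata]
    (f : Euc n → Sph m) (hf : Measurable f) :
    (-2 * t + Real.log (hyp0F1 ((m : ℝ) / 2) (t ^ 2)) ≤ Lunif pdata f t ∧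
        Lunif pdata f t ≤ 0) ∧
      (Lunif pdata f t = -2 * t + Real.log (hyp0F1 ((m : ℝ) / 2) (t ^ 2)) ↔
        pdata.map f = unifSphere m) ∧
      (Lunif pdata f t = 0 ↔ ∃ c : Sph m, ∀ᵐ x ∂pdata, f x = c) := by
  obtain ⟨m, rfl⟩ : ∃ k, m = k + 1 := ⟨m - 1, by omega⟩
  have hU := unif_prob m
  set g : Euc n → Euc (m + 1) := fun x => (f x : Euc (m + 1)) with hg
  have hgm : Measurable g := measurable_subtype_coe.comp hf
  set I := ∫ x, ∫ y, Real.exp (-t * ‖(f x : Euc (m + 1)) - (f y : Euc (m + 1))‖ ^ 2) ∂pdata ∂pdata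
    with hI
  have hL : Lunif pdata f t = Real.log I := rfl
  set F := hyp0F1 (((m + 1 : ℕ) : ℝ) / 2) (t ^ 2) with hF
  obtain ⟨x0⟩ : Nonempty (Euc n) := ⟨0⟩
  have hFpos : 0 < F := hyp_pos (f x0 : Euc (m + 1)) (norm_eq_of_mem_sphere _) t
  set μ := pdata.map g with hμ
  set ν := (unifSphere (m + 1)).map (Subtype.val : Sph (m + 1) → Euc (m + 1)) with hν
  have : IsProbabilityMeasure μ := Measure.isProbabilityMeasure_map hgm.aemeasurable
  have : IsProbabilityMeasure ν := Measure.isProbabilityMeasure_map (by fun_prop)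
  have hkc : ∀ u : Euc (m + 1), Continuous fun v : Euc (m + 1) => Real.exp (-t * ‖u - v‖ ^ 2) :=
    fun u => by fun_prop
  have hIμ : ∫ u, ∫ v, Real.exp (-t * ‖u - v‖ ^ 2) ∂μ ∂μ = I := by
    have h1 : ∀ u : Euc (m + 1), ∫ v, Real.exp (-t * ‖u - v‖ ^ 2) ∂μ
        = ∫ y, Real.exp (-t * ‖u - g y‖ ^ 2) ∂pdata := fun u =>
      integral_map hgm.aemeasurable (hkc u).aestronglyMeasurable
    have hsm : StronglyMeasurable fun u : Euc (m + 1) => ∫ v, Real.exp (-t * ‖u - v‖ ^ 2) ∂μ := by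
      have : Continuous fun p : Euc (m + 1) × Euc (m + 1) => Real.exp (-t * ‖p.1 - p.2‖ ^ 2) := by
        fun_prop
      exact this.stronglyMeasurable.integral_prod_right'
    rw [integral_map hgm.aemeasurable hsm.aestronglyMeasurable]
    simp_rw [h1]
    rfl
  have hc : ∀ u : Euc (m + 1), ‖u‖ = 1 →
      ∫ v, Real.exp (-t * ‖u - v‖ ^ 2) ∂ν = Real.exp (-2 * t) * F := by
    intro u hu
    rw [integral_map (by fun_prop) (hkc u).aestronglyMeasurable]
    exact sphere_kernel u hu t
  have hcm : MeasurableSet {u : Euc (m + 1) | ‖u‖ = 1} :=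
    (isClosed_eq continuous_norm continuous_const).measurableSet
  have hμ1 : ∀ᵐ u ∂μ, ‖u‖ = 1 := by
    rw [ae_map_iff hgm.aemeasurable hcm]
    exact ae_of_all _ fun x => norm_eq_of_mem_sphere _
  have hν1 : ∀ᵐ u ∂ν, ‖u‖ = 1 := by
    rw [ae_map_iff (by fun_prop) hcm]
    exact ae_of_all _ fun x => norm_eq_of_mem_sphere _
  have hdiff := energy_diff ht μ ν hc hμ1 hν1
  rw [hIμ] at hdiff
  have hcpos : 0 < Real.exp (-2 * t) * F := mul_pos (Real.exp_pos _) hFpos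
  have hlow : Real.exp (-2 * t) * F ≤ I := by
    have : 0 ≤ I - Real.exp (-2 * t) * F := by
      rw [hdiff]; exact integral_nonneg fun x => by positivity
    linarith
  have hIpos : 0 < I := hcpos.trans_le hlow
  have hlogc : -2 * t + Real.log F = Real.log (Real.exp (-2 * t) * F) := by
    rw [Real.log_mul (Real.exp_pos _).ne' hFpos.ne', Real.log_exp]
  -- the kernel is bounded by one
  set K : Euc n × Euc n → ℝ := fun p => Real.exp (-t * ‖(f p.1 : Euc (m + 1)) - f p.2‖ ^ 2) with hK
  have hKi : Integrable K (pdata.prod pdata) := kernel_integrable t ht _ f hf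
  have hIK : I = ∫ p, K p ∂(pdata.prod pdata) := (integral_prod _ hKi).symm
  have hK1 : ∀ p, K p ≤ 1 := fun p => by
    simp only [hK, Real.exp_le_one_iff]
    nlinarith [sq_nonneg ‖(f p.1 : Euc (m + 1)) - (f p.2 : Euc (m + 1))‖]
  have h1K : 1 - I = ∫ p, (1 - K p) ∂(pdata.prod pdata) := by
    rw [integral_sub (integrable_const _) hKi, hIK]; simp
  have hup : I ≤ 1 := by
    have : 0 ≤ 1 - I := by
      rw [h1K]; exact integral_nonneg fun p => sub_nonneg.2 (hK1 p)
    linarith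
  refine ⟨⟨?_, ?_⟩, ?_, ?_⟩
  · rw [hL, hlogc]
    exact Real.log_le_log hcpos hlow
  · rw [hL]
    exact Real.log_nonpos hIpos.le hup
  · rw [hL, hlogc, Real.log_injOn_pos.eq_iff hIpos hcpos]
    have hμν : μ = ν ↔ pdata.map f = unifSphere (m + 1) := by
      have e : μ = (pdata.map f).map Subtype.val := by
        rw [Measure.map_map measurable_subtype_coe hf]; rfl
      rw [e, hν]
      refine ⟨fun h => ?_, fun h => by rw [h]⟩
      have hemb := MeasurableEmbedding.subtype_coe
        (Metric.isClosed_sphere (x := (0 : Euc (m + 1))) (ε := 1)).measurableSet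
      rw [← hemb.comap_map (pdata.map f), h, hemb.comap_map]
    rw [← hμν]
    constructor
    · intro h
      apply energy_eq ht
      rw [← hdiff, h, sub_self]
    · intro h
      rw [← sub_eq_zero, hdiff, h]
      simp
  · rw [hL]
    have hlog0 : Real.log I = 0 ↔ I = 1 := by
      rw [← Real.log_one, Real.log_injOn_pos.eq_iff hIpos (Set.mem_Ioi.2 one_pos)]
    rw [hlog0]
    constructor
    · intro h
      rw [h, sub_self, eq_comm, integral_eq_zero_iff_of_nonneg (fun p => sub_nonneg.2 (hK1 p))
        ((integrable_const _).sub hKi)] at h1K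
      have h2 := Measure.ae_ae_of_ae_prod h1K
      obtain ⟨x, hx⟩ := h2.exists
      refine ⟨f x, hx.mono fun y hy => ?_⟩
      have hy' : K (x, y) = 1 := by
        have : 1 - K (x, y) = 0 := hy
        linarith
      simp only [hK, Real.exp_eq_one_iff, mul_eq_zero, neg_eq_zero, ht.ne', false_or,
        pow_eq_zero_iff two_ne_zero, norm_eq_zero, sub_eq_zero] at hy'
      exact (Subtype.ext hy').symm
    · rintro ⟨c, hc'⟩
      have : ∀ᵐ x ∂pdata, ∫ y, Real.exp (-t * ‖(f x : Euc (m + 1)) - f y‖ ^ 2) ∂pdata = 1 := by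
        filter_upwards [hc'] with x hx
        rw [integral_congr_ae (g := fun _ => (1 : ℝ))]
        · simp
        · filter_upwards [hc'] with y hy
          simp [hx, hy]
      rw [hI, integral_congr_ae (g := fun _ => (1 : ℝ)) this]
      simp
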